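/- Let G be a finite simple graph, Z a cycle in G, λ : E(G) → ℤ/2 an edge labeling, and B a bridge of G with respect to Z such that for every x ∈ V(B) ∩ V(Z), every proper closed walk in B based at x is trivial (B induces no loop). Then there exists a function f : V(B) ∩ V(Z) → ℤ/2 such that for all x, y ∈ V(B) ∩ V(Z), there exists a nontrivial proper walk in B from x to y if and only if f(x) ≠ f(y). In other words, the pairs of vertices of V(B) ∩ V(Z) joined by a nontrivial proper walk in B form a complete bipartite graph (one of whose parts may be empty). -/

import Mathlib

open SimpleGraph

variable {V : Type*}

/-- The `λ`-value of a walk: the sum in `ℤ/2`, over the edges of the walk counted with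
multiplicity, of their labels. -/
def walkLambda (lam : Sym2 V → ZMod 2) {G : SimpleGraph V} {x y : V} (w : G.Walk x y) :
    ZMod 2 :=
  (w.edges.map lam).sum

/-- `b` can be reached from `a` by a walk in `G` all of whose vertices avoid `Zv`. -/
def ReachAvoiding (G : SimpleGraph V) (Zv : Set V) (a b : V) : Prop :=
  ∃ w : G.Walk a b, ∀ x ∈ w.support, x ∉ Zv

/-- `B` is a bridge of `G` with respect to a cycle with vertex set `Zv` and edge set `Ze`:
either a single edge not of the cycle together with its two endpoints, both on the cycle,
or a connected component of `G − Zv` together with all edges (and their endpoints on the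
cycle) joining it to `Zv`. -/
def IsBridgeOf (G : SimpleGraph V) (Zv : Set V) (Ze : Set (Sym2 V)) (B : G.Subgraph) :
    Prop :=
  (∃ u v, G.Adj u v ∧ s(u, v) ∉ Ze ∧ u ∈ Zv ∧ v ∈ Zv ∧
      B.verts = {u, v} ∧ ∀ a b, B.Adj a b ↔ s(a, b) = s(u, v)) ∨
  (∃ a, a ∉ Zv ∧
      B.verts = {b | ReachAvoiding G Zv a b} ∪
        {z | z ∈ Zv ∧ ∃ c, ReachAvoiding G Zv a c ∧ G.Adj c z} ∧
      ∀ x y, B.Adj x y ↔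
        G.Adj x y ∧ (ReachAvoiding G Zv a x ∨ ReachAvoiding G Zv a y))

/-- `w` is a proper walk lying in the subgraph `B`, with respect to a cycle with vertex
set `Zv` and edge set `Ze`: the walk lies in `B`, none of its vertices lies on the cycle
except possibly its endpoints, and none of its edges is an edge of the cycle. -/
def IsProperWalkIn {G : SimpleGraph V} (B : G.Subgraph) (Zv : Set V) (Ze : Set (Sym2 V))
    {x y : V} (w : G.Walk x y) : Prop :=
  (∀ u ∈ w.support, u ∈ B.verts) ∧ (∀ e ∈ w.edges, e ∈ B.edgeSet) ∧
    (∀ u ∈ w.support, u ∈ Zv → u = x ∨ u = y) ∧ (∀ e ∈ w.edges, e ∉ Ze)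

/-- The set of `λ`-values of proper walks in `B` from `x` to the reference vertex `w`. -/
def labelSet {G : SimpleGraph V} (B : G.Subgraph) (Zv : Set V) (Ze : Set (Sym2 V))
    (lam : Sym2 V → ZMod 2) (x w : V) : Set (ZMod 2) :=
  {t | ∃ ω : G.Walk x w, IsProperWalkIn B Zv Ze ω ∧ walkLambda lam ω = t}

/-- A graph is 2-connected: it has at least three vertices, it is connected, and it
remains connected after the deletion of any single vertex. -/
def TwoConnected (G : SimpleGraph V) : Prop :=
  3 ≤ Nat.card V ∧ G.Connected ∧ ∀ v : V, (G.induce {u | u ≠ v}).Connected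

/-!
A bridge that meets `Z` and induces no loop has a potential: a vertex function `p` such that
each edge `xy` of `B` has label `p x + p y`. The label of a walk in `B` is then the sum of the
potentials of its two endpoints, so `p` itself is the required `f`, as any two vertices of `V(B)
∩ V(Z)` are joined by a proper walk. For a bridge arising from a component of `G − V(Z)`, fix a
vertex `a` of the component and let `p b` be the label of any proper walk from `a` to `b`.
Proper walks can be concatenated at vertices off `Z`, so two such walks close up to a proper
closed walk: at `b` if `b ∈ V(Z)`, and otherwise at a fixed vertex of `V(B) ∩ V(Z)`, after a
detour through `a`.
-/

section WalkLambda

variable {G : SimpleGraph V} (lam : Sym2 V → ZMod 2) {x y z : V}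

theorem walkLambda_nil : walkLambda lam (Walk.nil : G.Walk x x) = 0 := by
  simp [walkLambda]

theorem walkLambda_cons (h : G.Adj x y) (w : G.Walk y z) :
    walkLambda lam (Walk.cons h w) = lam s(x, y) + walkLambda lam w := by
  simp [walkLambda]

theorem walkLambda_toWalk (h : G.Adj x y) : walkLambda lam h.toWalk = lam s(x, y) := by
  simp [walkLambda]

theorem walkLambda_append (v : G.Walk x y) (w : G.Walk y z) :
    walkLambda lam (v.append w) = walkLambda lam v + walkLambda lam w := by
  simp [walkLambda]

theorem walkLambda_reverse (w : G.Walk x y) : walkLambda lam w.reverse = walkLambda lam w := by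
  simp [walkLambda]

end WalkLambda

section Potential

variable {G : SimpleGraph V} {B : G.Subgraph} {lam : Sym2 V → ZMod 2}

/-- `p` is a potential for the labelling `lam` on the subgraph `B`: on the edges of `B`, `lam` is
the coboundary of `p`. -/
def IsPotentialOn (B : G.Subgraph) (lam : Sym2 V → ZMod 2) (p : V → ZMod 2) : Prop :=
  ∀ ⦃x y⦄, B.Adj x y → lam s(x, y) = p x + p y

theorem IsPotentialOn.walkLambda_eq {p : V → ZMod 2} (hp : IsPotentialOn B lam p) {x y : V}
    (w : G.Walk x y) (hw : ∀ e ∈ w.edges, e ∈ B.edgeSet) : walkLambda lam w = p x + p y := by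
  induction w with
  | nil => rw [walkLambda_nil, CharTwo.add_self_eq_zero]
  | @cons x y z h q ih =>
    rw [Walk.edges_cons, List.forall_mem_cons] at hw
    calc walkLambda lam (Walk.cons h q)
        = (p x + p y) + (p y + p z) := by rw [walkLambda_cons, ih hw.2, hp hw.1]
      _ = p x + p z := by rw [add_assoc, CharTwo.add_cancel_left]

theorem exists_isPotentialOn_of_adj_imp_eq {u v : V} (h : ∀ x y, B.Adj x y → s(x, y) = s(u, v)) :
    ∃ p, IsPotentialOn B lam p := by
  classical
  refine ⟨Pi.single u (lam s(u, v)), fun x y hxy => ?_⟩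
  have hne : x ≠ y := hxy.ne
  rw [h x y hxy]
  rcases Sym2.eq_iff.1 (h x y hxy) with ⟨rfl, rfl⟩ | ⟨rfl, rfl⟩ <;> simp [hne, hne.symm]

end Potential

namespace IsProperWalkIn

variable {G : SimpleGraph V} {B : G.Subgraph} {Zv : Set V} {Ze : Set (Sym2 V)} {x y z : V}

theorem nil (hx : x ∈ B.verts) : IsProperWalkIn B Zv Ze (Walk.nil : G.Walk x x) := by
  simp [IsProperWalkIn, hx]

theorem toWalk (h : B.Adj x y) (he : s(x, y) ∉ Ze) : IsProperWalkIn B Zv Ze h.adj_sub.toWalk := by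
  simp +contextual [IsProperWalkIn, h, h.fst_mem, h.snd_mem, he]

theorem reverse {w : G.Walk x y} (hw : IsProperWalkIn B Zv Ze w) :
    IsProperWalkIn B Zv Ze w.reverse := by
  simpa [IsProperWalkIn, or_comm] using hw

theorem append {v : G.Walk x y} {w : G.Walk y z} (hv : IsProperWalkIn B Zv Ze v)
    (hw : IsProperWalkIn B Zv Ze w) (hy : y ∉ Zv) : IsProperWalkIn B Zv Ze (v.append w) := by
  simp only [IsProperWalkIn, Walk.mem_support_append_iff, Walk.edges_append, List.mem_append]
  grind [IsProperWalkIn]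

end IsProperWalkIn

/-- `B` induces no loop: the proper closed walks in `B` based at the vertices of `V(B) ∩ V(Z)` are
trivial. -/
def InducesNoLoop {G : SimpleGraph V} (B : G.Subgraph) (Zv : Set V) (Ze : Set (Sym2 V))
    (lam : Sym2 V → ZMod 2) : Prop :=
  ∀ x, x ∈ B.verts → x ∈ Zv → ∀ w : G.Walk x x, IsProperWalkIn B Zv Ze w → walkLambda lam w = 0

/-- `a` is a hub of `B`: a vertex off the cycle from which every vertex of `B` is reached by a
proper walk, where moreover no edge of `B` is on the cycle or joins two of its vertices.
Every vertex of a component of `G − V(Z)` is a hub of the corresponding bridge. -/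
structure IsHub {G : SimpleGraph V} (B : G.Subgraph) (Zv : Set V) (Ze : Set (Sym2 V)) (a : V) :
    Prop where
  notMem : a ∉ Zv
  exists_walk : ∀ b ∈ B.verts, ∃ w : G.Walk a b, IsProperWalkIn B Zv Ze w
  endpoint_notMem : ∀ x y, B.Adj x y → x ∉ Zv ∨ y ∉ Zv
  edge_notMem : ∀ x y, B.Adj x y → s(x, y) ∉ Ze

namespace IsHub

variable {G : SimpleGraph V} {B : G.Subgraph} {Zv : Set V} {Ze : Set (Sym2 V)}
  {lam : Sym2 V → ZMod 2} {a x y : V}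

theorem exists_isProperWalkIn (ha : IsHub B Zv Ze a) (hx : x ∈ B.verts) (hy : y ∈ B.verts) :
    ∃ w : G.Walk x y, IsProperWalkIn B Zv Ze w := by
  obtain ⟨v, hv⟩ := ha.exists_walk x hx
  obtain ⟨w, hw⟩ := ha.exists_walk y hy
  exact ⟨v.reverse.append w, hv.reverse.append hw ha.notMem⟩

theorem walkLambda_eq (ha : IsHub B Zv Ze a) (hno : InducesNoLoop B Zv Ze lam)
    (hBZ : (B.verts ∩ Zv).Nonempty) {b : V} {v w : G.Walk a b} (hv : IsProperWalkIn B Zv Ze v)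
    (hw : IsProperWalkIn B Zv Ze w) : walkLambda lam v = walkLambda lam w := by
  refine CharTwo.add_eq_zero.1 ?_
  by_cases hb : b ∈ Zv
  · have hclosed := hno b (hv.1 b v.end_mem_support) hb _ (hv.reverse.append hw ha.notMem)
    rwa [walkLambda_append, walkLambda_reverse] at hclosed
  · obtain ⟨x₀, hx₀B, hx₀Z⟩ := hBZ
    obtain ⟨r, hr⟩ := ha.exists_walk x₀ hx₀B
    have hclosed := hno x₀ hx₀B hx₀Z _
      (hr.reverse.append ((hv.append hw.reverse hb).append hr ha.notMem) ha.notMem)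
    simp only [walkLambda_append, walkLambda_reverse] at hclosed
    linear_combination hclosed - CharTwo.add_self_eq_zero (walkLambda lam r)

theorem exists_isPotentialOn (ha : IsHub B Zv Ze a) (hno : InducesNoLoop B Zv Ze lam)
    (hBZ : (B.verts ∩ Zv).Nonempty) : ∃ p, IsPotentialOn B lam p := by
  have hconst : ∀ b, ∃ t, ∀ w : G.Walk a b, IsProperWalkIn B Zv Ze w → walkLambda lam w = t := by
    intro b
    by_cases h : ∃ w : G.Walk a b, IsProperWalkIn B Zv Ze w
    · obtain ⟨v, hv⟩ := h
      exact ⟨walkLambda lam v, fun w hw => ha.walkLambda_eq hno hBZ hw hv⟩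
    · exact ⟨0, fun w hw => absurd ⟨w, hw⟩ h⟩
  choose p hp using hconst
  refine ⟨p, fun x y hxy => ?_⟩
  wlog hx : x ∉ Zv generalizing x y
  · rw [Sym2.eq_swap, add_comm]
    exact this y x hxy.symm ((ha.endpoint_notMem x y hxy).resolve_left hx)
  obtain ⟨q, hq⟩ := ha.exists_walk x hxy.fst_mem
  have hpy := hp y _ (hq.append (.toWalk hxy (ha.edge_notMem x y hxy)) hx)
  rw [walkLambda_append, walkLambda_toWalk, hp x q hq] at hpy
  rw [← hpy, CharTwo.add_cancel_left]

end IsHub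

section Bridge

variable {G : SimpleGraph V} {B : G.Subgraph} {Zv : Set V} {Ze : Set (Sym2 V)} {a b : V}

theorem ReachAvoiding.notMem (h : ReachAvoiding G Zv a b) : b ∉ Zv :=
  let ⟨w, hw⟩ := h
  hw b w.end_mem_support

theorem reachAvoiding_of_mem_support {w : G.Walk a b} (hw : ∀ x ∈ w.support, x ∉ Zv) {u : V}
    (hu : u ∈ w.support) : ReachAvoiding G Zv a u := by
  classical
  exact ⟨w.takeUntil u hu, fun x hx => hw x (w.support_takeUntil_subset_support hu hx)⟩

theorem isHub_of_component (hZe : ∀ e ∈ Ze, ∀ u ∈ e, u ∈ Zv) (ha : a ∉ Zv)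
    (hverts : B.verts = {b | ReachAvoiding G Zv a b} ∪
      {z | z ∈ Zv ∧ ∃ c, ReachAvoiding G Zv a c ∧ G.Adj c z})
    (hadj : ∀ x y, B.Adj x y ↔ G.Adj x y ∧ (ReachAvoiding G Zv a x ∨ ReachAvoiding G Zv a y)) :
    IsHub B Zv Ze a := by
  have hend : ∀ x y, B.Adj x y → x ∉ Zv ∨ y ∉ Zv := fun x y h =>
    ((hadj x y).1 h).2.imp ReachAvoiding.notMem ReachAvoiding.notMem
  have hedge : ∀ x y, B.Adj x y → s(x, y) ∉ Ze := fun x y h he =>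
    (hend x y h).elim (· (hZe _ he x (Sym2.mem_mk_left x y)))
      (· (hZe _ he y (Sym2.mem_mk_right x y)))
  have hwalk : ∀ c, ReachAvoiding G Zv a c → ∃ w : G.Walk a c, IsProperWalkIn B Zv Ze w := by
    rintro c ⟨w, hw⟩
    have hwB : ∀ e ∈ w.edges, e ∈ B.edgeSet := Sym2.ind fun u v he =>
      (hadj u v).2 ⟨w.adj_of_mem_edges he,
        .inl (reachAvoiding_of_mem_support hw (w.fst_mem_support_of_mem_edges he))⟩
    exact ⟨w, fun u hu => hverts ▸ .inl (reachAvoiding_of_mem_support hw hu), hwB,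
      fun u hu huZ => absurd huZ (hw u hu), fun e he => Sym2.ind hedge e (hwB e he)⟩
  refine ⟨ha, fun b hb => ?_, hend, hedge⟩
  rw [hverts] at hb
  rcases hb with hb | ⟨-, c, hc, hcb⟩
  · exact hwalk b hb
  · obtain ⟨w, hw⟩ := hwalk c hc
    have hcbB : B.Adj c b := (hadj c b).2 ⟨hcb, .inl hc⟩
    exact ⟨_, hw.append (.toWalk hcbB (hedge c b hcbB)) hc.notMem⟩

theorem exists_isProperWalkIn_of_chord {u v x y : V} (he : s(u, v) ∉ Ze)
    (hverts : B.verts = {u, v}) (hadj : B.Adj u v) (hx : x ∈ B.verts) (hy : y ∈ B.verts) :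
    ∃ w : G.Walk x y, IsProperWalkIn B Zv Ze w := by
  have huv : ∃ w : G.Walk u v, IsProperWalkIn B Zv Ze w := ⟨_, .toWalk hadj he⟩
  have hvu : ∃ w : G.Walk v u, IsProperWalkIn B Zv Ze w := huv.imp' Walk.reverse fun _ => .reverse
  have hnil : ∃ w : G.Walk x x, IsProperWalkIn B Zv Ze w := ⟨_, .nil hx⟩
  rw [hverts] at hx hy
  rcases hx with rfl | rfl <;> rcases hy with rfl | rfl <;> assumption

theorem IsBridgeOf.exists_isProperWalkIn (hB : IsBridgeOf G Zv Ze B)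
    (hZe : ∀ e ∈ Ze, ∀ u ∈ e, u ∈ Zv) {x y : V} (hx : x ∈ B.verts) (hy : y ∈ B.verts) :
    ∃ w : G.Walk x y, IsProperWalkIn B Zv Ze w := by
  rcases hB with ⟨u, v, -, he, -, -, hverts, hadj⟩ | ⟨a, ha, hverts, hadj⟩
  · exact exists_isProperWalkIn_of_chord he hverts ((hadj u v).2 rfl) hx hy
  · exact (isHub_of_component hZe ha hverts hadj).exists_isProperWalkIn hx hy

theorem IsBridgeOf.exists_isPotentialOn {lam : Sym2 V → ZMod 2} (hB : IsBridgeOf G Zv Ze B)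
    (hZe : ∀ e ∈ Ze, ∀ u ∈ e, u ∈ Zv) (hno : InducesNoLoop B Zv Ze lam)
    (hBZ : (B.verts ∩ Zv).Nonempty) : ∃ p, IsPotentialOn B lam p := by
  rcases hB with ⟨u, v, -, -, -, -, -, hadj⟩ | ⟨a, ha, hverts, hadj⟩
  · exact exists_isPotentialOn_of_adj_imp_eq fun x y => (hadj x y).1
  · exact (isHub_of_component hZe ha hverts hadj).exists_isPotentialOn hno hBZ

end Bridge

theorem statement6_general (G : SimpleGraph V) (lam : Sym2 V → ZMod 2) (Zv : Set V)
    (Ze : Set (Sym2 V)) (hZe : ∀ e ∈ Ze, ∀ u ∈ e, u ∈ Zv) (B : G.Subgraph)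
    (hB : IsBridgeOf G Zv Ze B) (hno : InducesNoLoop B Zv Ze lam) :
    ∃ f : V → ZMod 2, ∀ x y, x ∈ B.verts → x ∈ Zv → y ∈ B.verts → y ∈ Zv →
      ((∃ w : G.Walk x y, IsProperWalkIn B Zv Ze w ∧ walkLambda lam w ≠ 0) ↔ f x ≠ f y) := by
  rcases (B.verts ∩ Zv).eq_empty_or_nonempty with hempty | hBZ
  · exact ⟨0, fun x y hx hxZ => absurd ⟨hx, hxZ⟩ (Set.eq_empty_iff_forall_notMem.1 hempty x)⟩
  obtain ⟨p, hp⟩ := hB.exists_isPotentialOn hZe hno hBZ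
  refine ⟨p, fun x y hx _ hy _ => ?_⟩
  have nontrivial_iff (w : G.Walk x y) (hw : IsProperWalkIn B Zv Ze w) :
      walkLambda lam w ≠ 0 ↔ p x ≠ p y := by
    rw [hp.walkLambda_eq w hw.2.1, Ne, CharTwo.add_eq_zero]
  obtain ⟨w, hw⟩ := hB.exists_isProperWalkIn hZe hx hy
  exact ⟨fun ⟨v, hv, hv0⟩ => (nontrivial_iff v hv).1 hv0,
    fun hxy => ⟨w, hw, (nontrivial_iff w hw).2 hxy⟩⟩

/-- If a bridge `B` induces no loop (every proper closed walk in `B` based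
at a vertex of `V(B) ∩ V(Z)` is trivial), then there is a `ℤ/2`-valued function `f` on
the vertices such that, for `x, y ∈ V(B) ∩ V(Z)`, a nontrivial proper walk in `B` from
`x` to `y` exists iff `f x ≠ f y`; i.e., the arrows induced by `B` form a complete
bipartite graph. -/
theorem statement6 [Fintype V] (G : SimpleGraph V) (lam : Sym2 V → ZMod 2)
    (z₀ : V) (Z : G.Walk z₀ z₀) (hZ : Z.IsCycle) (B : G.Subgraph)
    (hB : IsBridgeOf G {u | u ∈ Z.support} {e | e ∈ Z.edges} B)
    (hnoloop : ∀ x, x ∈ B.verts → x ∈ Z.support → ∀ w : G.Walk x x,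
      IsProperWalkIn B {u | u ∈ Z.support} {e | e ∈ Z.edges} w → walkLambda lam w = 0) :
    ∃ f : V → ZMod 2, ∀ x y, x ∈ B.verts → x ∈ Z.support → y ∈ B.verts → y ∈ Z.support →
      ((∃ w : G.Walk x y, IsProperWalkIn B {u | u ∈ Z.support} {e | e ∈ Z.edges} w ∧
          walkLambda lam w ≠ 0) ↔ f x ≠ f y) :=
  statement6_general G lam _ _ (fun _ he _ hu => Z.mem_support_of_mem_edges he hu) B hB hnoloop
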